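/- Let $F$ be a non-archimedean local field with residue cardinality $q$, and $f_s^{\rm St} \in V_s$ the Steinberg vector, i.e., the unique $\Gamma_0(\mathfrak{p})$-invariant vector with $f_s^{\rm St}(1) = 1$ and $f_s^{\rm St}\big(\begin{pmatrix}0&-1\\1&0\end{pmatrix}\big) = -q^{-1}$. Then for $v(\alpha y) \geq 0$ and $q^{2s}\neq 1$: $(W_s^\alpha f_s^{\rm St})\big(\begin{pmatrix}y&0\\0&1\end{pmatrix}\big) = \frac{(1-q^{-2s-1})|\alpha|^{2s}|y|^{1/2+s} - (1-q^{2s-1})|y|^{1/2-s}}{1 - q^{2s}}$, and the value is $0$ when $v(\alpha y) < 0$. In particular at $s = 1/2$ with $v(\alpha y)\geq 0$, $(W_{1/2}^\alpha f_{1/2}^{\rm St})\big(\begin{pmatrix}y&0\\0&1\end{pmatrix}\big) = -q^{-1}|\alpha y|(1+q^{-1})$. -/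

import Mathlib

open Complex Matrix MeasureTheory Filter

lemma aux_nonarch {F : Type*} [Field F] (abv : AbsoluteValue F ℝ) (q : ℕ) (hq : 1 < q)
    (hdisc : ∀ x : F, x ≠ 0 → ∃ m : ℤ, abv x = (q : ℝ) ^ m) (x y : F) (r : ℝ)
    (hx : abv x ≤ r) (hy : abv y ≤ r) : abv (x + y) ≤ r := by
  have hq1 : (1 : ℝ) < q := by exact_mod_cast hq
  have hq2 : (2 : ℝ) ≤ q := by exact_mod_cast hq
  have hgap : ∀ x : F, 1 < abv x → (q : ℝ) ≤ abv x := by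
    intro x hx
    have h0 : x ≠ 0 := by rintro rfl; simp at hx; linarith
    obtain ⟨m, hm⟩ := hdisc x h0
    rw [hm] at hx ⊢
    have h1 : 0 < m := by
      by_contra h
      have := zpow_le_zpow_right₀ hq1.le (show m ≤ 0 by omega)
      simp at this; linarith
    simpa using zpow_le_zpow_right₀ hq1.le (show 1 ≤ m by omega)
  -- key: |u| ≤ 1 → |1+u| ≤ 1
  have key : ∀ u : F, abv u ≤ 1 → abv (1 + u) ≤ 1 := by
    intro u hu
    by_contra h
    push Not at h
    have h1 := hgap _ h
    have h2 : abv (1 + u) ≤ 1 + abv u := by simpa using abv.add_le 1 u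
    have h3 : abv (1 + u) = 2 := by linarith
    have hqq : (q : ℝ) = 2 := by linarith
    have h4 : abv (1 + u * u) ≤ 1 + abv u * abv u := by simpa using abv.add_le 1 (u * u)
    have h5 : abv u * abv u ≤ 1 := by nlinarith [abv.nonneg u]
    have h6 : abv ((1 + u) * (1 + u)) = 4 := by rw [abv.map_mul, h3]; norm_num
    have h7 : abv ((1 + u * u) + 2 * u) ≤ abv (1 + u * u) + abv 2 * abv u := by
      simpa using abv.add_le (1 + u * u) (2 * u)
    rw [show (1 + u) * (1 + u) = (1 + u * u) + 2 * u by ring] at h6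
    have h8 : abv (2 : F) * abv u ≤ abv (2 : F) := by nlinarith [abv.nonneg (2 : F)]
    have h9 : 2 ≤ abv (2 : F) := by linarith
    have h10 : abv (2 : F) ≤ 2 := by
      have := abv.add_le (1 : F) 1
      rw [one_add_one_eq_two] at this
      simp at this; linarith
    have h11 : abv (2 : F) = 2 := le_antisymm h10 h9
    have h12 : abv (4 : F) = 4 := by
      rw [show (4 : F) = 2 * 2 by norm_num, abv.map_mul, h11]; norm_num
    have h13 : abv (4 : F) ≤ abv (3 : F) + 1 := by
      have := abv.add_le (3 : F) 1
      rw [show (3 : F) + 1 = 4 by norm_num] at this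
      simpa using this
    have h14 : abv (3 : F) ≤ 3 := by
      have := abv.add_le (2 : F) 1
      rw [show (2 : F) + 1 = 3 by norm_num] at this
      simp at this; linarith
    have h15 : abv (3 : F) = 3 := by linarith
    have h30 : (3 : F) ≠ 0 := by intro h; rw [h] at h15; simp at h15
    obtain ⟨m, hm⟩ := hdisc 3 h30
    rw [h15, hqq] at hm
    rcases le_or_gt m 1 with h | h
    · have := zpow_le_zpow_right₀ (show (1 : ℝ) ≤ 2 by norm_num) h
      norm_num at this; linarith
    · have := zpow_le_zpow_right₀ (show (1 : ℝ) ≤ 2 by norm_num) (show 2 ≤ m by omega)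
      norm_num at this; linarith
  have main : ∀ x y : F, abv y ≤ abv x → abv (x + y) ≤ abv x := by
    intro x y h
    by_cases hx0 : x = 0
    · subst hx0
      simpa using h
    · have hp : 0 < abv x := abv.pos hx0
      have := key (y / x) (by rw [map_div₀, div_le_one hp]; exact h)
      have e : x + y = x * (1 + y / x) := by field_simp
      rw [e, abv.map_mul]
      nlinarith
  rcases le_total (abv y) (abv x) with h | h
  · exact (main x y h).trans hx
  · rw [add_comm]; exact (main y x h).trans hy

lemma aux_decomp {F : Type*} [Field F] (abv : AbsoluteValue F ℝ) (q : ℕ) (hq : 1 < q)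
    (p : F) (hp : abv p = q)
    (hcoset : ∀ n : ℕ, ∃ T : Finset F, T.card = q ^ n ∧
      ({x : F | abv x ≤ (q : ℝ) ^ n} = ⋃ c ∈ T, {x : F | abv (x - c) ≤ 1}) ∧
      ∀ c ∈ T, ∀ c' ∈ T, c ≠ c' → 1 < abv (c - c')) (k : ℤ) (n : ℕ) :
    ∃ T : Finset F, T.card = q ^ n ∧
      ({x : F | abv x ≤ (q : ℝ) ^ (k + n)} = ⋃ c ∈ T, {x : F | abv (x - c) ≤ (q : ℝ) ^ k}) ∧
      ∀ c ∈ T, ∀ c' ∈ T, c ≠ c' → (q : ℝ) ^ k < abv (c - c') := by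
  classical
  have hq1 : (1 : ℝ) < q := by exact_mod_cast hq
  have hp0 : p ≠ 0 := by
    rintro rfl
    rw [map_zero] at hp
    linarith
  have hpk : p ^ k ≠ 0 := zpow_ne_zero _ hp0
  have hqk : (0 : ℝ) < (q : ℝ) ^ k := zpow_pos (by linarith) _
  have hapk : abv (p ^ k) = (q : ℝ) ^ k := by rw [map_zpow₀, hp]
  obtain ⟨T, hc, hU, hd⟩ := hcoset n
  refine ⟨T.image (fun c => p ^ k * c), ?_, ?_, ?_⟩
  · rw [Finset.card_image_of_injective _ (mul_right_injective₀ hpk), hc]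
  · ext x
    have := Set.ext_iff.mp hU (x / p ^ k)
    simp only [Set.mem_ofPred_eq, Set.mem_iUnion, Finset.mem_image, exists_prop,
      exists_exists_and_eq_and] at this ⊢
    rw [map_div₀, hapk, div_le_iff₀ hqk] at this
    rw [zpow_add₀ (by linarith), zpow_natCast, mul_comm ((q : ℝ) ^ k), this]
    refine exists_congr fun c => and_congr_right fun _ => ?_
    have e : x - p ^ k * c = p ^ k * (x / p ^ k - c) := by field_simp
    rw [e, abv.map_mul, hapk]
    constructor
    · intro h; nlinarith
    · intro h; exact le_of_mul_le_mul_left (by linarith) hqk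
  · intro c hc c' hc' hne
    simp only [Finset.mem_image] at hc hc'
    obtain ⟨a, ha, rfl⟩ := hc
    obtain ⟨b, hb, rfl⟩ := hc'
    have := hd a ha b hb (by rintro rfl; exact hne rfl)
    rw [← mul_sub, abv.map_mul, hapk]
    nlinarith

lemma aux_vol {F : Type*} [Field F] [MeasurableSpace F] (abv : AbsoluteValue F ℝ)
    (μ : Measure F) (hμinv : ∀ (t : F) (s : Set F), μ ((t + ·) ⁻¹' s) = μ s)
    (c : F) (r : ℝ) : μ {x : F | abv (x - c) ≤ r} = μ {x : F | abv x ≤ r} := by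
  rw [← hμinv (-c) {x : F | abv x ≤ r}]
  congr 1
  ext x
  simp [sub_eq_neg_add]

lemma aux_disj {F : Type*} [Field F] (abv : AbsoluteValue F ℝ)
    (hna : ∀ (x y : F) (r : ℝ), abv x ≤ r → abv y ≤ r → abv (x + y) ≤ r)
    (T : Finset F) (r : ℝ) (hd : ∀ c ∈ T, ∀ c' ∈ T, c ≠ c' → r < abv (c - c')) :
    Set.PairwiseDisjoint (T : Set F) (fun c => {x : F | abv (x - c) ≤ r}) := by
  intro a ha b hb hab
  rw [Function.onFun, Set.disjoint_left]
  intro x hx hx'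
  simp only [Set.mem_ofPred_eq] at hx hx'
  have := hd a ha b hb hab
  have h2 := hna (x - b) (-(x - a)) r hx' (by rwa [abv.map_neg])
  rw [show x - b + -(x - a) = a - b by ring] at h2
  linarith

lemma aux_vol2 {F : Type*} [Field F] [MeasurableSpace F] (abv : AbsoluteValue F ℝ)
    (q : ℕ) (hq : 1 < q) (p : F) (hp : abv p = q)
    (hna : ∀ (x y : F) (r : ℝ), abv x ≤ r → abv y ≤ r → abv (x + y) ≤ r)
    (μ : Measure F)
    (hμ1 : μ {x : F | abv x ≤ 1} = 1)
    (hμinv : ∀ (t : F) (s : Set F), μ ((t + ·) ⁻¹' s) = μ s)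
    (hmeas : ∀ (c : F) (r : ℝ), MeasurableSet {x : F | abv (x - c) ≤ r})
    (hcoset : ∀ n : ℕ, ∃ T : Finset F, T.card = q ^ n ∧
      ({x : F | abv x ≤ (q : ℝ) ^ n} = ⋃ c ∈ T, {x : F | abv (x - c) ≤ 1}) ∧
      ∀ c ∈ T, ∀ c' ∈ T, c ≠ c' → 1 < abv (c - c')) (k : ℤ) :
    μ {x : F | abv x ≤ (q : ℝ) ^ k} = ENNReal.ofReal ((q : ℝ) ^ k) := by
  have hq1 : (1 : ℝ) < q := by exact_mod_cast hq
  have step : ∀ (k : ℤ) (n : ℕ), μ {x : F | abv x ≤ (q : ℝ) ^ (k + n)} =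
      (q : ENNReal) ^ n * μ {x : F | abv x ≤ (q : ℝ) ^ k} := by
    intro k n
    obtain ⟨T, hc, hU, hd⟩ := aux_decomp abv q hq p hp hcoset k n
    rw [hU, measure_biUnion_finset (aux_disj abv hna T _ hd) (fun c _ => hmeas c _)]
    simp [aux_vol abv μ hμinv, hc]
  have hqn : ∀ n : ℕ, (q : ENNReal) ^ n = ENNReal.ofReal ((q : ℝ) ^ n) := by
    intro n
    rw [ENNReal.ofReal_pow (by linarith), ENNReal.ofReal_natCast]
  obtain ⟨n, rfl | rfl⟩ := k.eq_nat_or_neg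
  · have := step 0 n
    simp only [zero_add, zpow_zero, hμ1, mul_one] at this
    rw [this, hqn, zpow_natCast]
  · have := step (-n) n
    simp only [neg_add_cancel, zpow_zero, hμ1] at this
    rw [_root_.zpow_neg, zpow_natCast] at this ⊢
    rw [ENNReal.ofReal_inv_of_pos (by positivity), ← hqn]
    rw [mul_comm] at this
    exact ENNReal.eq_inv_of_mul_eq_one_left this.symm

lemma aux_int {F : Type*} [Field F] [MeasurableSpace F] (abv : AbsoluteValue F ℝ)
    (hna : ∀ (x y : F) (r : ℝ), abv x ≤ r → abv y ≤ r → abv (x + y) ≤ r)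
    (μ : Measure F)
    (hmeas : ∀ (c : F) (r : ℝ), MeasurableSet {x : F | abv (x - c) ≤ r})
    (r : ℝ) (hr : 0 ≤ r)
    (hvol : ∀ c, μ {x : F | abv (x - c) ≤ r} = ENNReal.ofReal r)
    (B : Set F) (T : Finset F) (hU : B = ⋃ c ∈ T, {x : F | abv (x - c) ≤ r})
    (hd : ∀ c ∈ T, ∀ c' ∈ T, c ≠ c' → r < abv (c - c'))
    (g : F → ℂ) (hg : ∀ c x, abv (x - c) ≤ r → g x = g c) :
    IntegrableOn g B μ ∧ ∫ b in B, g b ∂μ = ∑ c ∈ T, (r : ℂ) * g c := by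
  have hi : ∀ c ∈ T, IntegrableOn g {x : F | abv (x - c) ≤ r} μ := by
    intro c _
    have h0 : Set.EqOn (fun _ => g c) g {x : F | abv (x - c) ≤ r} := fun x hx => (hg c x hx).symm
    exact IntegrableOn.congr_fun (integrableOn_const (by rw [hvol]; exact ENNReal.ofReal_ne_top))
      h0 (hmeas c r)
  subst hU
  refine ⟨(integrableOn_finset_iUnion).2 hi, ?_⟩
  rw [integral_biUnion_finset T (fun c _ => hmeas c r) (aux_disj abv hna T r hd) hi]
  refine Finset.sum_congr rfl fun c _ => ?_
  rw [setIntegral_congr_fun (g := fun _ => g c) (hmeas c r) (fun x hx => hg c x hx),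
    setIntegral_const, Measure.real, hvol, ENNReal.toReal_ofReal hr]
  simp

lemma aux_shift {F : Type*} [Field F] [MeasurableSpace F] (abv : AbsoluteValue F ℝ)
    (hna : ∀ (x y : F) (r : ℝ), abv x ≤ r → abv y ≤ r → abv (x + y) ≤ r)
    (μ : Measure F)
    (hmeas : ∀ (c : F) (r : ℝ), MeasurableSet {x : F | abv (x - c) ≤ r})
    (r R : ℝ) (hr : 0 ≤ r)
    (hvol : ∀ c, μ {x : F | abv (x - c) ≤ r} = ENNReal.ofReal r)
    (T : Finset F) (hU : {x : F | abv x ≤ R} = ⋃ c ∈ T, {x : F | abv (x - c) ≤ r})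
    (hd : ∀ c ∈ T, ∀ c' ∈ T, c ≠ c' → r < abv (c - c'))
    (g : F → ℂ) (hg : ∀ c x, abv (x - c) ≤ r → g x = g c) (t : F) (ht : abv t ≤ R) :
    ∫ b in {x : F | abv x ≤ R}, g (b + t) ∂μ = ∫ b in {x : F | abv x ≤ R}, g b ∂μ := by
  classical
  have h1 := (aux_int abv hna μ hmeas r hr hvol _ T hU hd (fun b => g (b + t)) (by
    intro c x h
    apply hg
    rwa [add_sub_add_right_eq_sub])).2
  have h2 := (aux_int abv hna μ hmeas r hr hvol {x : F | abv x ≤ R} (T.image (· + t)) (by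
    ext x
    have := Set.ext_iff.mp hU (x - t)
    simp only [Set.mem_ofPred_eq, Set.mem_iUnion, Finset.mem_image, exists_prop,
      exists_exists_and_eq_and] at this ⊢
    have e : abv x ≤ R ↔ abv (x - t) ≤ R := by
      constructor
      · intro h
        rw [sub_eq_add_neg]
        exact hna _ _ _ h (by rwa [abv.map_neg])
      · intro h
        simpa using hna _ _ _ h ht
    rw [e, this]
    simp only [sub_sub, add_comm]) (by
    intro c hc c' hc' hne
    simp only [Finset.mem_image] at hc hc'
    obtain ⟨a, ha, rfl⟩ := hc
    obtain ⟨b, hb, rfl⟩ := hc'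
    rw [add_sub_add_right_eq_sub]
    exact hd a ha b hb (by rintro rfl; exact hne rfl)) g hg).2
  rw [h1, h2, Finset.sum_image (fun a _ b _ h => add_right_cancel h)]

lemma aux_cpow (q : ℕ) (hq : 1 < q) (m : ℤ) (w : ℂ) :
    (((q : ℝ) ^ m : ℝ) : ℂ) ^ w = ((q : ℂ) ^ w) ^ m := by
  have hq0 : (0 : ℝ) < q := by exact_mod_cast (by omega : 0 < q)
  have h1 : (((q : ℝ) ^ m : ℝ) : ℂ) ≠ 0 := by
    exact_mod_cast (zpow_pos hq0 m).ne'
  have h2 : (q : ℂ) ≠ 0 := by exact_mod_cast hq0.ne'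
  rw [cpow_def_of_ne_zero h1, cpow_def_of_ne_zero h2, ← Complex.exp_int_mul,
    ← Complex.ofReal_log (zpow_pos hq0 m).le, Real.log_zpow]
  rw [show (q : ℂ) = ((q : ℝ) : ℂ) by simp, ← Complex.ofReal_log hq0.le]
  push_cast
  ring_nf

lemma aux_rec {F : Type*} [Field F] [MeasurableSpace F]
    (abv : AbsoluteValue F ℝ) (q : ℕ) (hq : 1 < q)
    (hdisc : ∀ x : F, x ≠ 0 → ∃ m : ℤ, abv x = (q : ℝ) ^ m)
    (μ : Measure F)
    (hmeas : ∀ (r : ℝ), MeasurableSet {x : F | abv x ≤ r})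
    (φ G : F → ℂ) (hφ : ∀ m : ℤ, IntegrableOn φ {x : F | abv x ≤ (q : ℝ) ^ m} μ)
    (Y : ℤ) (C : ℂ) (c : ℤ → ℂ)
    (hG0 : ∀ b, abv b ≤ (q : ℝ) ^ Y → G b = C * φ b)
    (hG1 : ∀ (b : F) (m : ℤ), Y < m → abv b = (q : ℝ) ^ m → G b = c m * φ b) :
    (∫ b in {x : F | abv x ≤ (q : ℝ) ^ Y}, G b ∂μ =
      C * ∫ b in {x : F | abv x ≤ (q : ℝ) ^ Y}, φ b ∂μ) ∧
    ∀ n : ℕ, ∫ b in {x : F | abv x ≤ (q : ℝ) ^ (Y + n + 1)}, G b ∂μ =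
      ∫ b in {x : F | abv x ≤ (q : ℝ) ^ (Y + n)}, G b ∂μ +
        c (Y + n + 1) * (∫ b in {x : F | abv x ≤ (q : ℝ) ^ (Y + n + 1)}, φ b ∂μ -
          ∫ b in {x : F | abv x ≤ (q : ℝ) ^ (Y + n)}, φ b ∂μ) := by
  have hq1 : (1 : ℝ) < q := by exact_mod_cast hq
  have hE0 : Set.EqOn G (fun b => C * φ b) {x : F | abv x ≤ (q : ℝ) ^ Y} := fun x hx => hG0 x hx
  have hsub : ∀ m : ℤ, {x : F | abv x ≤ (q : ℝ) ^ m} ⊆ {x : F | abv x ≤ (q : ℝ) ^ (m + 1)} :=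
    fun m x hx => le_trans hx (zpow_le_zpow_right₀ hq1.le (by omega))
  have hE1 : ∀ m : ℤ, Y ≤ m → Set.EqOn G (fun b => c (m + 1) * φ b)
      ({x : F | abv x ≤ (q : ℝ) ^ (m + 1)} \ {x : F | abv x ≤ (q : ℝ) ^ m}) := by
    intro m hm x hx
    have h1 : abv x ≤ (q : ℝ) ^ (m + 1) := hx.1
    have h2 : ¬ abv x ≤ (q : ℝ) ^ m := hx.2
    push Not at h2
    refine hG1 x (m + 1) (by omega) ?_
    have h0 : x ≠ 0 := by
      rintro rfl
      rw [map_zero] at h2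
      have : (0 : ℝ) < (q : ℝ) ^ m := zpow_pos (by linarith) _
      linarith
    obtain ⟨k, hk⟩ := hdisc x h0
    rw [hk] at h1 h2 ⊢
    rw [zpow_le_zpow_iff_right₀ hq1] at h1
    rw [zpow_lt_zpow_iff_right₀ hq1] at h2
    rw [show k = m + 1 by omega]
  have hmd : ∀ m : ℤ, MeasurableSet
      ({x : F | abv x ≤ (q : ℝ) ^ (m + 1)} \ {x : F | abv x ≤ (q : ℝ) ^ m}) :=
    fun m => (hmeas _).diff (hmeas _)
  have hId : ∀ m : ℤ, Y ≤ m → IntegrableOn G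
      ({x : F | abv x ≤ (q : ℝ) ^ (m + 1)} \ {x : F | abv x ≤ (q : ℝ) ^ m}) μ := by
    intro m hm
    have h1 : IntegrableOn (fun b => c (m + 1) * φ b)
      ({x : F | abv x ≤ (q : ℝ) ^ (m + 1)} \ {x : F | abv x ≤ (q : ℝ) ^ m}) μ :=
      ((hφ (m + 1)).mono_set Set.sdiff_subset).const_mul (c (m + 1))
    exact IntegrableOn.congr_fun h1 (hE1 m hm).symm (hmd m)
  have hI : ∀ n : ℕ, IntegrableOn G {x : F | abv x ≤ (q : ℝ) ^ (Y + n)} μ := by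
    intro n
    induction n with
    | zero =>
      have h1 : IntegrableOn (fun b => C * φ b) {x : F | abv x ≤ (q : ℝ) ^ Y} μ :=
        (hφ Y).const_mul C
      simpa using IntegrableOn.congr_fun h1 hE0.symm (hmeas _)
    | succ n ih =>
      have := ih.union (hId (Y + n) (by omega))
      rw [Set.union_sdiff_cancel (hsub _)] at this
      rw [show Y + ((n + 1 : ℕ) : ℤ) = Y + n + 1 by push_cast; ring]
      exact this
  refine ⟨?_, fun n => ?_⟩
  · rw [setIntegral_congr_fun (hmeas _) hE0, integral_const_mul]
  · have hI1 : IntegrableOn G {x : F | abv x ≤ (q : ℝ) ^ (Y + n + 1)} μ := by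
      have := hI (n + 1)
      rwa [show Y + ((n + 1 : ℕ) : ℤ) = Y + n + 1 by push_cast; ring] at this
    have h1 := setIntegral_sdiff (hmeas _) hI1 (hsub (Y + n))
    have h2 := setIntegral_sdiff (hmeas _) (hφ (Y + n + 1)) (hsub (Y + n))
    rw [← h2, ← integral_const_mul, ← setIntegral_congr_fun (hmd _) (hE1 (Y + n) (by omega)), h1]
    ring

lemma aux_f {F : Type*} [Field F]
    (abv : AbsoluteValue F ℝ) (q : ℕ) (hq : 1 < q)
    (s : ℂ)
    (f : Matrix (Fin 2) (Fin 2) F → ℂ)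
    (htrans : ∀ (a d : F), a ≠ 0 → d ≠ 0 → ∀ (b : F) (g : Matrix (Fin 2) (Fin 2) F),
      f (!![a, b; 0, d] * g) = ((abv (a * d⁻¹) : ℝ) : ℂ) ^ (s + 1 / 2) * f g)
    (hΓ : ∀ (g κ : Matrix (Fin 2) (Fin 2) F),
      abv (κ 0 0) ≤ 1 → abv (κ 0 1) ≤ 1 → abv (κ 1 0) ≤ ((q : ℝ))⁻¹ → abv (κ 1 1) ≤ 1 →
      abv κ.det = 1 → f (g * κ) = f g)
    (hone : f 1 = 1) (hw : f !![0, -1; 1, 0] = -((q : ℂ))⁻¹)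
    (y : F) (hy : y ≠ 0) (Y : ℤ) (hY : abv y = (q : ℝ) ^ Y) :
    (∀ b, abv b ≤ (q : ℝ) ^ Y → f (!![0, -1; 1, 0] * !![1, b; 0, 1] * !![y, 0; 0, 1]) =
      -((q : ℂ))⁻¹ * ((q : ℂ) ^ (s + 1 / 2)) ^ (-Y)) ∧
    (∀ (b : F) (m : ℤ), Y < m → abv b = (q : ℝ) ^ m →
      f (!![0, -1; 1, 0] * !![1, b; 0, 1] * !![y, 0; 0, 1]) =
      ((q : ℂ) ^ (s + 1 / 2)) ^ (Y - 2 * m)) := by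
  have hq1 : (1 : ℝ) < q := by exact_mod_cast hq
  have hq0 : (0 : ℝ) < q := by linarith
  constructor
  · intro b hb
    have e : !![0, -1; 1, 0] * !![1, b; 0, 1] * !![y, 0; 0, 1] =
        !![1, 0; 0, y] * (!![0, -1; 1, 0] * !![1, b / y; 0, 1]) := by
      ext i j
      fin_cases i <;> fin_cases j <;> simp [Matrix.mul_apply, Fin.sum_univ_two]
      field_simp
    rw [e, htrans 1 y one_ne_zero hy, hΓ, hw, one_mul, map_inv₀, hY, ← _root_.zpow_neg,
      aux_cpow q hq]
    · ring
    · simp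
    · simp only [Matrix.of_apply, Matrix.cons_val]
      rw [map_div₀, hY, div_le_one (zpow_pos hq0 _)]
      exact hb
    · simp
    · simp
    · simp [Matrix.det_fin_two]
  · intro b m hm hb
    have hb0 : b ≠ 0 := by
      rintro rfl
      rw [map_zero] at hb
      have := zpow_pos hq0 m
      linarith
    have e : !![0, -1; 1, 0] * !![1, b; 0, 1] * !![y, 0; 0, 1] =
        !![y / b, -1; 0, b] * (1 * !![1, 0; y / b, 1]) := by
      ext i j
      fin_cases i <;> fin_cases j <;> simp [Matrix.mul_apply, Fin.sum_univ_two]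
      field_simp
    rw [e, htrans _ _ (div_ne_zero hy hb0) hb0, hΓ, hone, mul_one]
    · rw [abv.map_mul, map_div₀, map_inv₀, hY, hb, ← aux_cpow q hq]
      congr 3
      rw [zpow_sub₀ hq0.ne', two_mul, zpow_add₀ hq0.ne']
      field_simp
    · simp
    · simp
    · simp only [Matrix.of_apply, Matrix.cons_val]
      rw [map_div₀, hY, hb, ← zpow_sub₀ hq0.ne', ← _root_.zpow_neg_one]
      exact zpow_le_zpow_right₀ hq1.le (by omega)
    · simp
    · simp [Matrix.det_fin_two]

lemma aux_alg (q : ℕ) (hq : 1 < q) (u r : ℂ) (hu : u ≠ 0) (hr : r ≠ 0) (hrq : r ^ 2 = q)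
    (hu1 : u ^ 2 ≠ 1) (Y a : ℤ) (N : ℕ) (hN : a + Y = -N) (I J : ℤ → ℂ)
    (hJ0 : ∀ m, a + m ≤ 0 → J m = (q : ℂ) ^ m) (hJ1 : ∀ m, 1 ≤ a + m → J m = 0)
    (hI0 : I Y = (-((q : ℂ))⁻¹ * (u * r) ^ (-Y)) * J Y)
    (hI1 : ∀ n : ℕ, I (Y + n + 1) = I (Y + n) + (u * r) ^ (Y - 2 * (Y + n + 1)) *
      (J (Y + n + 1) - J (Y + n))) (k : ℕ) :
    I (Y + N + 1 + k) = ((1 - (u ^ 2)⁻¹ * (q : ℂ)⁻¹) * (u ^ 2) ^ a * (r * u) ^ Y -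
      (1 - u ^ 2 * (q : ℂ)⁻¹) * (r * u⁻¹) ^ Y) / (1 - u ^ 2) := by
  have hq0 : (q : ℂ) ≠ 0 := by exact_mod_cast (by omega : q ≠ 0)
  have hd : (1 - u ^ 2) ≠ 0 := sub_ne_zero.mpr (Ne.symm hu1)
  have ha : a = -Y - N := by omega
  have hA : ∀ n : ℕ, n ≤ N → I (Y + n) = (r * u⁻¹) ^ Y *
      (-(q : ℂ)⁻¹ + (1 - (q : ℂ)⁻¹) * ((1 - (u ^ 2)⁻¹ ^ n) / (u ^ 2 - 1))) := by
    intro n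
    have hd' : u ^ 2 - 1 ≠ 0 := sub_ne_zero.mpr hu1
    induction n with
    | zero =>
      intro _
      simp only [Nat.cast_zero, add_zero, pow_zero, sub_self, zero_div, mul_zero]
      rw [hI0, hJ0 Y (by omega), ← hrq]
      rw [_root_.zpow_neg, mul_zpow, mul_zpow, _root_.inv_zpow, sq, mul_zpow]
      have := zpow_ne_zero Y hu
      have := zpow_ne_zero Y hr
      field_simp
    | succ n ih =>
      intro hn
      have h := hI1 n
      rw [show Y + ((n + 1 : ℕ) : ℤ) = Y + n + 1 by push_cast; ring, h, ih (by omega),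
        hJ0 _ (by omega), hJ0 _ (by omega), ← hrq]
      rw [show Y - 2 * (Y + n + 1) = -(Y + (n + n + 1 + 1 : ℕ)) by push_cast; ring,
        show Y + (n : ℤ) + 1 = Y + (n + 1 : ℕ) by push_cast; ring]
      simp only [_root_.zpow_neg, mul_zpow, _root_.inv_zpow, sq, zpow_add₀ hu, zpow_add₀ hr,
        zpow_natCast, _root_.inv_pow]
      have := zpow_ne_zero Y hu
      have := zpow_ne_zero Y hr
      have hd'' : u * u - 1 ≠ 0 := by rwa [← sq]
      field_simp
      ring
  have hB : I (Y + N + 1) = ((1 - (u ^ 2)⁻¹ * (q : ℂ)⁻¹) * (u ^ 2) ^ a * (r * u) ^ Y -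
      (1 - u ^ 2 * (q : ℂ)⁻¹) * (r * u⁻¹) ^ Y) / (1 - u ^ 2) := by
    have hd' : u ^ 2 - 1 ≠ 0 := sub_ne_zero.mpr hu1
    rw [hI1 N, hA N le_rfl, hJ1 _ (by omega), hJ0 _ (by omega), ← hrq, ha]
    rw [show Y - 2 * (Y + N + 1) = -(Y + (N + N + 1 + 1 : ℕ)) by push_cast; ring,
      show -Y - (N : ℤ) = -(Y + N) by ring]
    simp only [_root_.zpow_neg, mul_zpow, _root_.inv_zpow, sq, zpow_add₀ hu, zpow_add₀ hr,
        zpow_natCast, _root_.inv_pow]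
    have := zpow_ne_zero Y hu
    have := zpow_ne_zero Y hr
    have hd'' : u * u - 1 ≠ 0 := by rwa [← sq]
    rw [← neg_sub (u * u) 1]
    field_simp
    ring
  induction k with
  | zero => simpa using hB
  | succ k ih =>
    have h := hI1 (N + 1 + k)
    rw [hJ1 _ (by push_cast; omega), hJ1 _ (by push_cast; omega)] at h
    rw [← ih, show Y + (N : ℤ) + 1 + ((k + 1 : ℕ) : ℤ) = Y + ((N + 1 + k : ℕ) : ℤ) + 1 by
      push_cast; ring, h]
    rw [show Y + (N : ℤ) + 1 + k = Y + ((N + 1 + k : ℕ) : ℤ) by push_cast; ring]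
    ring

theorem stmt14 {F : Type*} [Field F] [MeasurableSpace F]
    (abv : AbsoluteValue F ℝ) (q : ℕ) (hq : 1 < q)
    (hdisc : ∀ x : F, x ≠ 0 → ∃ m : ℤ, abv x = (q : ℝ) ^ m)
    (μ : Measure F)
    (hμ1 : μ {x : F | abv x ≤ 1} = 1)
    (hμinv : ∀ (t : F) (s : Set F), μ ((t + ·) ⁻¹' s) = μ s)
    (hmeas : ∀ (c : F) (r : ℝ), MeasurableSet {x : F | abv (x - c) ≤ r})
    (hcoset : ∀ n : ℕ, ∃ T : Finset F, T.card = q ^ n ∧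
      ({x : F | abv x ≤ (q : ℝ) ^ n} = ⋃ c ∈ T, {x : F | abv (x - c) ≤ 1}) ∧
      ∀ c ∈ T, ∀ c' ∈ T, c ≠ c' → 1 < abv (c - c'))
    (ψ : F → ℂ)
    (hψtriv : ∀ x : F, abv x ≤ 1 → ψ x = 1)
    (hψnt : ∃ x : F, abv x ≤ (q : ℝ) ∧ ψ x ≠ 1)
    (hψadd : ∀ x y : F, ψ (x + y) = ψ x * ψ y)
    (s : ℂ) (hs : (((q : ℝ)) : ℂ) ^ (2 * s) ≠ 1)
    (f : Matrix (Fin 2) (Fin 2) F → ℂ)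
    (htrans : ∀ (a d : F), a ≠ 0 → d ≠ 0 → ∀ (b : F) (g : Matrix (Fin 2) (Fin 2) F),
      f (!![a, b; 0, d] * g) = ((abv (a * d⁻¹) : ℝ) : ℂ) ^ (s + 1 / 2) * f g)
    (hΓ : ∀ (g κ : Matrix (Fin 2) (Fin 2) F),
      abv (κ 0 0) ≤ 1 → abv (κ 0 1) ≤ 1 → abv (κ 1 0) ≤ ((q : ℝ))⁻¹ → abv (κ 1 1) ≤ 1 →
      abv κ.det = 1 → f (g * κ) = f g)
    (hone : f 1 = 1) (hw : f !![0, -1; 1, 0] = -((q : ℂ))⁻¹)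
    (α y : F) (hα : α ≠ 0) (hy : y ≠ 0) :
    (abv (α * y) ≤ 1 →
      Tendsto (fun n : ℕ =>
          ∫ b in {b : F | abv b ≤ (q : ℝ) ^ n},
            f (!![0, -1; 1, 0] * !![1, b; 0, 1] * !![y, 0; 0, 1]) * ψ (-(α * b)) ∂μ)
        atTop
        (nhds (((1 - (((q : ℝ)) : ℂ) ^ (-(2 * s) - 1)) * ((abv α : ℝ) : ℂ) ^ (2 * s) *
              ((abv y : ℝ) : ℂ) ^ (1 / 2 + s) -
            (1 - (((q : ℝ)) : ℂ) ^ (2 * s - 1)) * ((abv y : ℝ) : ℂ) ^ (1 / 2 - s)) /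
          (1 - (((q : ℝ)) : ℂ) ^ (2 * s))))) ∧
    (1 < abv (α * y) →
      Tendsto (fun n : ℕ =>
          ∫ b in {b : F | abv b ≤ (q : ℝ) ^ n},
            f (!![0, -1; 1, 0] * !![1, b; 0, 1] * !![y, 0; 0, 1]) * ψ (-(α * b)) ∂μ)
        atTop (nhds 0)) ∧
    (s = 1 / 2 → abv (α * y) ≤ 1 →
      Tendsto (fun n : ℕ =>
          ∫ b in {b : F | abv b ≤ (q : ℝ) ^ n},
            f (!![0, -1; 1, 0] * !![1, b; 0, 1] * !![y, 0; 0, 1]) * ψ (-(α * b)) ∂μ)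
        atTop
        (nhds (-((q : ℂ))⁻¹ * ((abv (α * y) : ℝ) : ℂ) * (1 + ((q : ℂ))⁻¹)))) := by
  classical
  have hq1 : (1 : ℝ) < q := by exact_mod_cast hq
  have hq0 : (0 : ℝ) < q := by linarith
  have hqc : (q : ℂ) ≠ 0 := by exact_mod_cast hq0.ne'
  have hna := aux_nonarch abv q hq hdisc
  obtain ⟨x1, hx1, hx1n⟩ := hψnt
  have hx10 : 1 < abv x1 := by
    by_contra h
    exact hx1n (hψtriv x1 (not_lt.mp h))
  have hp : abv x1 = q := by
    have h0 : x1 ≠ 0 := by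
      rintro rfl
      rw [map_zero] at hx10
      linarith
    obtain ⟨m, hm⟩ := hdisc x1 h0
    rw [hm] at hx1 hx10 ⊢
    have h1 : m ≤ 1 := by
      rw [← zpow_le_zpow_iff_right₀ hq1]; simpa using hx1
    have h2 : 0 < m := by
      rw [← zpow_lt_zpow_iff_right₀ hq1]; simpa using hx10
    rw [show m = 1 by omega, zpow_one]
  have hvol0 := aux_vol2 abv q hq x1 hp hna μ hμ1 hμinv hmeas hcoset
  have hvol : ∀ (k : ℤ) (c : F),
      μ {x : F | abv (x - c) ≤ (q : ℝ) ^ k} = ENNReal.ofReal ((q : ℝ) ^ k) := by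
    intro k c
    rw [aux_vol abv μ hμinv, hvol0]
  have hmeas0 : ∀ r : ℝ, MeasurableSet {x : F | abv x ≤ r} := by
    intro r
    simpa using hmeas 0 r
  obtain ⟨Y, hY⟩ := hdisc y hy
  obtain ⟨a, ha⟩ := hdisc α hα
  have hφc : ∀ (k : ℤ), k ≤ -a → ∀ c x : F, abv (x - c) ≤ (q : ℝ) ^ k →
      ψ (-(α * x)) = ψ (-(α * c)) := by
    intro k hk c x h
    have e : -(α * x) = -(α * c) + -(α * (x - c)) := by ring
    rw [e, hψadd, hψtriv (-(α * (x - c))), mul_one]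
    rw [abv.map_neg, abv.map_mul, ha]
    calc (q : ℝ) ^ a * abv (x - c) ≤ (q : ℝ) ^ a * (q : ℝ) ^ k := by gcongr
      _ = (q : ℝ) ^ (a + k) := (zpow_add₀ hq0.ne' _ _).symm
      _ ≤ (q : ℝ) ^ (0 : ℤ) := zpow_le_zpow_right₀ hq1.le (by omega)
      _ = 1 := zpow_zero _
  have hdec : ∀ m : ℤ, ∃ k : ℤ, k ≤ -a ∧ ∃ T : Finset F,
      ({x : F | abv x ≤ (q : ℝ) ^ m} = ⋃ c ∈ T, {x : F | abv (x - c) ≤ (q : ℝ) ^ k}) ∧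
      ∀ c ∈ T, ∀ c' ∈ T, c ≠ c' → (q : ℝ) ^ k < abv (c - c') := by
    intro m
    refine ⟨min m (-a), min_le_right _ _, ?_⟩
    obtain ⟨T, -, h1, h2⟩ := aux_decomp abv q hq x1 hp hcoset (min m (-a))
      (m - min m (-a)).toNat
    refine ⟨T, ?_, h2⟩
    rw [← h1, Int.toNat_of_nonneg (by omega)]
    congr! 4
    omega
  have hφI : ∀ m : ℤ, IntegrableOn (fun b => ψ (-(α * b))) {x : F | abv x ≤ (q : ℝ) ^ m} μ := by
    intro m
    obtain ⟨k, hk, T, hU, hd⟩ := hdec m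
    exact (aux_int abv hna μ hmeas _ (zpow_pos hq0 k).le (hvol k) _ T hU hd _ (hφc k hk)).1
  have hJ0 : ∀ m : ℤ, a + m ≤ 0 →
      ∫ b in {x : F | abv x ≤ (q : ℝ) ^ m}, ψ (-(α * b)) ∂μ = (q : ℂ) ^ m := by
    intro m hm
    have h0 : Set.EqOn (fun b => ψ (-(α * b))) (fun _ => (1 : ℂ))
        {x : F | abv x ≤ (q : ℝ) ^ m} := by
      intro x hx
      have := hφc m (by omega) 0 x (by simpa using hx)
      simp only [this, mul_zero, neg_zero]
      exact hψtriv 0 (by simp)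
    rw [setIntegral_congr_fun (hmeas0 _) h0, setIntegral_const, Measure.real, hvol0,
      ENNReal.toReal_ofReal (zpow_pos hq0 m).le]
    simp
  have hJ1 : ∀ m : ℤ, 1 ≤ a + m →
      ∫ b in {x : F | abv x ≤ (q : ℝ) ^ m}, ψ (-(α * b)) ∂μ = 0 := by
    intro m hm
    obtain ⟨k, hk, T, hU, hd⟩ := hdec m
    have h := aux_shift abv hna μ hmeas _ _ (zpow_pos hq0 k).le (hvol k) T hU hd _ (hφc k hk)
      (-(x1 / α)) (by
        rw [abv.map_neg, map_div₀, hp, ha]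
        nth_rewrite 1 [← zpow_one (q : ℝ)]
        rw [← zpow_sub₀ hq0.ne']
        exact zpow_le_zpow_right₀ hq1.le (by omega))
    have e : ∀ b : F, ψ (-(α * (b + -(x1 / α)))) = ψ x1 * ψ (-(α * b)) := by
      intro b
      rw [← hψadd]
      congr 1
      field_simp
      ring
    simp only [e] at h
    rw [integral_const_mul] at h
    by_contra h0
    exact hx1n (mul_right_cancel₀ h0 (h.trans (one_mul _).symm))
  obtain ⟨hf0, hf1⟩ := aux_f abv q hq s f htrans hΓ hone hw y hy Y hY
  set u : ℂ := (q : ℂ) ^ s with hu_def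
  set r : ℂ := (q : ℂ) ^ (1 / 2 : ℂ) with hr_def
  have hu : u ≠ 0 := by simp [hu_def, cpow_eq_zero_iff, hqc]
  have hr : r ≠ 0 := by simp [hr_def, cpow_eq_zero_iff, hqc]
  have hrq : r ^ 2 = q := by
    rw [hr_def, sq, ← cpow_add _ _ hqc]; norm_num
  have hur : (q : ℂ) ^ (s + 1 / 2) = u * r := cpow_add _ _ hqc
  have hu2 : (q : ℂ) ^ (2 * s) = u ^ 2 := by
    rw [two_mul, cpow_add _ _ hqc, sq]
  rw [hur] at hf0 hf1
  obtain ⟨hI0, hI1⟩ := aux_rec abv q hq hdisc μ hmeas0 (fun b => ψ (-(α * b)))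
    (fun b => f (!![0, -1; 1, 0] * !![1, b; 0, 1] * !![y, 0; 0, 1]) * ψ (-(α * b))) hφI Y
    (-((q : ℂ))⁻¹ * (u * r) ^ (-Y)) (fun m => (u * r) ^ (Y - 2 * m))
    (fun b hb => by simp only [hf0 b hb]) (fun b m hm hb => by simp only [hf1 b m hm hb])
  set G : F → ℂ := fun b => f (!![0, -1; 1, 0] * !![1, b; 0, 1] * !![y, 0; 0, 1]) * ψ (-(α * b))
    with hG
  have hay : abv (α * y) = (q : ℝ) ^ (a + Y) := by
    rw [abv.map_mul, ha, hY, zpow_add₀ hq0.ne']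
  have hs' : u ^ 2 ≠ 1 := by
    rw [← hu2]; simpa using hs
  have hlim : ∀ (L : ℂ) (M : ℤ), (∀ k : ℕ, ∫ b in {x : F | abv x ≤ (q : ℝ) ^ (M + k)}, G b ∂μ = L) →
      Tendsto (fun n : ℕ => ∫ b in {b : F | abv b ≤ (q : ℝ) ^ n}, G b ∂μ) atTop (nhds L) := by
    intro L M h
    refine tendsto_const_nhds.congr' ?_
    filter_upwards [eventually_ge_atTop M.toNat] with n hn
    have := h ((n : ℤ) - M).toNat
    rw [Int.toNat_of_nonneg (by omega), add_sub_cancel, zpow_natCast] at this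
    exact this.symm
  have hP1 : abv (α * y) ≤ 1 →
      Tendsto (fun n : ℕ => ∫ b in {b : F | abv b ≤ (q : ℝ) ^ n}, G b ∂μ) atTop
        (nhds (((1 - (((q : ℝ)) : ℂ) ^ (-(2 * s) - 1)) * ((abv α : ℝ) : ℂ) ^ (2 * s) *
              ((abv y : ℝ) : ℂ) ^ (1 / 2 + s) -
            (1 - (((q : ℝ)) : ℂ) ^ (2 * s - 1)) * ((abv y : ℝ) : ℂ) ^ (1 / 2 - s)) /
          (1 - (((q : ℝ)) : ℂ) ^ (2 * s)))) := by
    intro h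
    have hle : a + Y ≤ 0 := by
      rw [hay] at h
      rw [← zpow_le_zpow_iff_right₀ hq1]; simpa using h
    refine hlim _ (Y + (-(a + Y)).toNat + 1) fun k => ?_
    have := aux_alg q hq u r hu hr hrq hs' Y a (-(a + Y)).toNat (by omega)
      (fun m => ∫ b in {x : F | abv x ≤ (q : ℝ) ^ m}, G b ∂μ)
      (fun m => ∫ b in {x : F | abv x ≤ (q : ℝ) ^ m}, ψ (-(α * b)) ∂μ) hJ0 hJ1 hI0 hI1 k
    rw [this, ha, hY, aux_cpow q hq, aux_cpow q hq, aux_cpow q hq, Complex.ofReal_natCast,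
      cpow_sub _ _ hqc, cpow_sub _ _ hqc, cpow_sub _ _ hqc, cpow_neg, cpow_add _ _ hqc, hu2,
      cpow_one, ← hu_def, ← hr_def]
    simp only [div_eq_mul_inv]
  refine ⟨hP1, ?_, ?_⟩
  · intro h
    have hlt : 0 < a + Y := by
      rw [hay] at h
      rw [← zpow_lt_zpow_iff_right₀ hq1]; simpa using h
    refine hlim _ Y fun k => ?_
    induction k with
    | zero => simp only [Nat.cast_zero, add_zero, hI0, hJ1 Y (by omega), mul_zero]
    | succ k ih =>
      rw [show Y + ((k + 1 : ℕ) : ℤ) = Y + k + 1 by push_cast; ring, hI1, ih,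
        hJ1 _ (by omega), hJ1 _ (by omega)]
      simp
  · intro hs2 h
    convert hP1 h using 2
    have hqm : (1 : ℂ) - q ≠ 0 := by
      rw [sub_ne_zero]; exact_mod_cast (by omega : 1 ≠ q)
    subst hs2
    rw [abv.map_mul, Complex.ofReal_natCast]
    norm_num
    rw [show (-2 : ℂ) = ((-2 : ℤ) : ℂ) by norm_num, cpow_intCast, show (-2 : ℤ) = -((2 : ℕ) : ℤ) by norm_num,
      _root_.zpow_neg, zpow_natCast]
    field_simp
    ring
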